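/- arXiv:1411.3432 — 8 statements merged into one kernel-verified Lean document; each statement's English description precedes it below -/
import Mathlib

section
/- Every isometry φ of C_n can be written as φ = T_a ∘ π for a unique word a ∈ C_n and a unique permutation π of {1,...,n}. Conversely, for every word a ∈ C_n and every permutation π of {1,...,n}, the map T_a ∘ π is an isometry of C_n. -/
/-!
Subtracting `φ 0` reduces to a distance-preserving map `ψ` with `ψ 0 = 0`. It preserves Hamming
weights, hence permutes the words of weight one, which are the unit words `Pi.single i 1`; say it
sends the `i`-th to the `σ i`-th. The coordinate `c i` is `1` exactly when `c` is closer to the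
`i`-th unit word than to `0`, a condition `ψ` preserves, so `ψ c (σ i) = c i`.
-/

open Function

section HammingDist

variable {ι κ : Type*} [Fintype ι] [Fintype κ]

theorem hammingDist_add_right {β : ι → Type*} [∀ i, DecidableEq (β i)] [∀ i, Add (β i)]
    [∀ i, IsRightCancelAdd (β i)] (x y a : ∀ i, β i) :
    hammingDist (x + a) (y + a) = hammingDist x y :=
  hammingDist_comp (fun i b ↦ b + a i) fun i ↦ add_left_injective (a i)

theorem hammingDist_comp_equiv {β : Type*} [DecidableEq β] (x y : ι → β) (e : κ ≃ ι) :
    hammingDist (x ∘ e) (y ∘ e) = hammingDist x y :=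
  Finset.card_equiv e (by simp)

variable [DecidableEq ι] {β : ι → Type*} [∀ i, DecidableEq (β i)] [∀ i, Zero (β i)]

theorem hammingNorm_eq_one_iff {x : ∀ i, β i} :
    hammingNorm x = 1 ↔ ∃ i, ∃ b ≠ 0, x = Pi.single i b := by
  constructor
  · intro hx
    obtain ⟨i, hi⟩ := Finset.card_eq_one.1 hx
    have support_eq (j : ι) : x j ≠ 0 ↔ j = i := by simpa using Finset.ext_iff.1 hi j
    refine ⟨i, x i, (support_eq i).2 rfl, funext fun j ↦ ?_⟩
    obtain rfl | hj := eq_or_ne j i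
    · simp
    · rw [Pi.single_eq_of_ne hj]
      exact not_not.1 fun h ↦ hj ((support_eq j).1 h)
  · rintro ⟨i, b, hb, rfl⟩
    refine Finset.card_eq_one.2 ⟨i, Finset.ext fun j ↦ ?_⟩
    obtain rfl | hj := eq_or_ne j i
    · simp [hb]
    · simp [hj]

theorem hammingDist_single_lt_hammingNorm_iff {x : ∀ i, β i} {i : ι} {b : β i} (hb : b ≠ 0) :
    hammingDist x (Pi.single i b) < hammingNorm x ↔ x i = b := by
  constructor
  · contrapose!
    intro hxi
    refine Finset.card_le_card fun j hj ↦ ?_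
    obtain rfl | hji := eq_or_ne j i
    · simpa using hxi
    · simpa [hji] using hj
  · rintro rfl
    refine Finset.card_lt_card (Finset.ssubset_iff_of_subset (fun j hj ↦ ?_) |>.2 ⟨i, ?_, ?_⟩)
    · obtain rfl | hji := eq_or_ne j i
      · simp at hj
      · simpa [hji] using hj
    · simpa using hb
    · simp

end HammingDist

theorem injective_comp_add {ι κ M : Type*} [AddRightCancelMonoid M] [Nontrivial M] :
    Injective fun (p : (κ → M) × (κ → ι)) (c : ι → M) ↦ c ∘ p.2 + p.1 := by
  classical
  rintro ⟨a, f⟩ ⟨b, g⟩ h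
  obtain rfl : a = b := by simpa using congrFun h 0
  refine Prod.ext rfl (funext fun k ↦ ?_)
  obtain ⟨m, hm⟩ := exists_ne (0 : M)
  have single_eq : (Pi.single (f k) m : ι → M) (f k) = (Pi.single (f k) m : ι → M) (g k) :=
    add_right_cancel (congrFun (congrFun h (Pi.single (f k) m)) k)
  by_contra hne
  exact hm (by simpa [Ne.symm hne] using single_eq)

theorem bijective_comp_equiv_add {ι κ G : Type*} [AddGroup G] (e : κ ≃ ι) (a : κ → G) :
    Bijective fun c : ι → G ↦ c ∘ e + a :=
  ((e.symm.arrowCongr (.refl G)).trans (.addRight a)).bijective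

theorem zmod_two_eq_one_of_ne_zero : ∀ {a : ZMod 2}, a ≠ 0 → a = 1 := by
  decide

theorem zmod_two_eq_of_eq_one_iff : ∀ {a b : ZMod 2}, (a = 1 ↔ b = 1) → a = b := by
  decide

section Cube

variable {ι : Type*} [Fintype ι]

theorem exists_perm_forall_eq_comp_of_map_zero {ψ : (ι → ZMod 2) → ι → ZMod 2} (h0 : ψ 0 = 0)
    (hψ : ∀ x y, hammingDist (ψ x) (ψ y) = hammingDist x y) :
    ∃ π : Equiv.Perm ι, ∀ c, ψ c = c ∘ π := by
  classical
  have norm_eq (c) : hammingNorm (ψ c) = hammingNorm c := by simpa [h0] using hψ c 0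
  have exists_single (i : ι) : ∃ j, ψ (Pi.single i 1) = Pi.single j 1 := by
    obtain ⟨j, b, hb, hj⟩ := hammingNorm_eq_one_iff.1
      ((norm_eq _).trans (hammingNorm_eq_one_iff.2 ⟨i, 1, one_ne_zero, rfl⟩))
    exact ⟨j, by rw [hj, zmod_two_eq_one_of_ne_zero hb]⟩
  choose σ hσ using exists_single
  have comp_eq (c) : ψ c ∘ σ = c := funext fun i ↦ zmod_two_eq_of_eq_one_iff <| by
    rw [comp_apply, ← hammingDist_single_lt_hammingNorm_iff one_ne_zero, ← hσ, hψ, norm_eq,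
      hammingDist_single_lt_hammingNorm_iff one_ne_zero]
  have σ_injective : Injective σ :=
    (surjective_comp_right_iff_injective (γ := ZMod 2)).1 fun c ↦ ⟨ψ c, comp_eq c⟩
  let e : Equiv.Perm ι := .ofBijective σ (Finite.injective_iff_bijective.1 σ_injective)
  exact ⟨e.symm, fun c ↦ (e.eq_comp_symm _ _).2 (comp_eq c)⟩

theorem exists_perm_forall_eq_comp_add {φ : (ι → ZMod 2) → ι → ZMod 2}
    (hφ : ∀ x y, hammingDist (φ x) (φ y) = hammingDist x y) :
    ∃ π : Equiv.Perm ι, ∀ c, φ c = c ∘ π + φ 0 := by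
  obtain ⟨π, hπ⟩ := exists_perm_forall_eq_comp_of_map_zero (ψ := fun c ↦ φ c + -φ 0)
    (add_neg_cancel _) fun x y ↦ by rw [hammingDist_add_right, hφ]
  exact ⟨π, fun c ↦ add_neg_eq_iff_eq_add.1 (hπ c)⟩

theorem isometry_eq_translation_comp_perm_general :
    (∀ φ : (ι → ZMod 2) → ι → ZMod 2,
      (∀ x y, hammingDist (φ x) (φ y) = hammingDist x y) →
      ∃! p : (ι → ZMod 2) × Equiv.Perm ι, φ = fun c ↦ c ∘ p.2 + p.1) ∧
    ∀ (a : ι → ZMod 2) (π : Equiv.Perm ι),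
      Bijective (fun c : ι → ZMod 2 ↦ c ∘ π + a) ∧
      ∀ x y : ι → ZMod 2, hammingDist (x ∘ π + a) (y ∘ π + a) = hammingDist x y := by
  refine ⟨fun φ hφ ↦ ?_, fun a π ↦ ⟨bijective_comp_equiv_add π a, fun x y ↦ ?_⟩⟩
  · obtain ⟨π, hπ⟩ := exists_perm_forall_eq_comp_add hφ
    refine ⟨(φ 0, π), funext hπ, fun p hp ↦ ?_⟩
    obtain ⟨word_eq, perm_eq⟩ := Prod.mk.inj <|
      injective_comp_add (a₁ := (p.1, ⇑p.2)) (a₂ := (φ 0, ⇑π)) (hp.symm.trans (funext hπ))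
    exact Prod.ext word_eq (DFunLike.coe_injective perm_eq)
  · rw [hammingDist_add_right, hammingDist_comp_equiv]

end Cube

/-- Every isometry of the Boolean cube `C_n` is uniquely the composition `T_a ∘ π` of a
coordinate permutation `π` and a translation `T_a`, and conversely every such composition
is an isometry. -/
theorem isometry_eq_translation_comp_perm (n : ℕ) (hn : 1 ≤ n) :
    (∀ φ : (Fin n → ZMod 2) → Fin n → ZMod 2,
      Function.Bijective φ →
      (∀ x y, hammingDist (φ x) (φ y) = hammingDist x y) →
      ∃! p : (Fin n → ZMod 2) × Equiv.Perm (Fin n),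
        φ = fun c => (fun k => c (p.2 k)) + p.1) ∧
    (∀ (a : Fin n → ZMod 2) (π : Equiv.Perm (Fin n)),
      Function.Bijective (fun c : Fin n → ZMod 2 => (fun k => c (π k)) + a) ∧
      ∀ x y : Fin n → ZMod 2,
        hammingDist ((fun k => x (π k)) + a) ((fun k => y (π k)) + a)
          = hammingDist x y) :=
  ⟨fun φ _ hφ ↦ isometry_eq_translation_comp_perm_general.1 φ hφ,
    isometry_eq_translation_comp_perm_general.2⟩
end

section
/- Let p be an odd integer with 1 ≤ p ≤ n such that 2p ≠ n−1, 2p ≠ n, 2p ≠ n+1 and p ≠ n. Then every p-isometry of C_n is an isometry. -/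
/-!
Two words at distance `2` have `2 * (n - 2).choose (p - 1)` common neighbours at distance `p`,
whereas two words at a larger even distance `2 * k` have
`k.centralBinom * (n - 2 * k).choose (p - k)`. The latter number is strictly smaller because, for
`|a - b| ≥ 2`, the ratio `k.centralBinom / (a + b).choose a` decreases when `k`, `a` and `b` grow by
one together, starting from `k = 1`. Hence a permutation preserving the distance `p` also preserves
the distance `2`. Words at distance `p - 2` are then recognised by their number of common neighbours
at distances `2` and `p`, after which the distances `p - 4, p - 6, …, 1` follow in turn. Finally,
the Hamming distance is the path metric of the graph joining words at distance `1`.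
-/

section Binomial

lemma strictMono_succ_choose_two : StrictMono fun n : ℕ ↦ (n + 1).choose 2 :=
  strictMono_nat_of_lt_succ fun n ↦ by
    rw [Nat.choose_succ_succ' (n + 1) 1, Nat.choose_one_right]
    exact Nat.lt_add_of_pos_left n.succ_pos

lemma choose_add_two_mul (a b : ℕ) :
    (a + b + 2).choose (a + 1) * ((a + 1) * (b + 1)) =
      (a + b + 2) * (a + b + 1) * (a + b).choose a := by
  have hlower := (Nat.add_one_mul_choose_eq (a + b + 1) a).symm
  have hupper := (Nat.choose_mul_succ_eq (a + b) a).symm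
  rw [show a + b + 1 - a = b + 1 by omega] at hupper
  linear_combination (b + 1) * hlower + (a + b + 2) * hupper

lemma centralBinom_succ_mul_choose_lt {k a b : ℕ} (hka : k ≤ a) (hab : a + 2 ≤ b) :
    (k + 2).centralBinom * (a + b).choose a <
      (k + 1).centralBinom * (a + b + 2).choose (a + 1) := by
  have hcentral := Nat.succ_mul_centralBinom_succ (k + 1)
  have hchoose := choose_add_two_mul a b
  have hratio : 2 * (2 * k + 3) * ((a + 1) * (b + 1)) <
      (k + 2) * ((a + b + 2) * (a + b + 1)) := by
    obtain ⟨d, rfl⟩ := Nat.exists_eq_add_of_le hka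
    obtain ⟨t, rfl⟩ := Nat.exists_eq_add_of_le hab
    ring_nf
    nlinarith
  have hpos : 0 < (k + 1).centralBinom * (a + b).choose a :=
    Nat.mul_pos (Nat.centralBinom_pos _) (Nat.choose_pos (by omega))
  refine lt_of_mul_lt_mul_right (a := (k + 2) * ((a + 1) * (b + 1))) ?_ (Nat.zero_le _)
  calc (k + 2).centralBinom * (a + b).choose a * ((k + 2) * ((a + 1) * (b + 1)))
      = 2 * (2 * k + 3) * ((a + 1) * (b + 1)) * ((k + 1).centralBinom * (a + b).choose a) := by
        linear_combination (a + b).choose a * ((a + 1) * (b + 1)) * hcentral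
    _ < (k + 2) * ((a + b + 2) * (a + b + 1)) * ((k + 1).centralBinom * (a + b).choose a) :=
        Nat.mul_lt_mul_of_pos_right hratio hpos
    _ = (k + 1).centralBinom * (a + b + 2).choose (a + 1) * ((k + 2) * ((a + 1) * (b + 1))) := by
        linear_combination (k + 2) * (k + 1).centralBinom * hchoose.symm

lemma centralBinom_mul_choose_lt {a b k : ℕ} (hab : a + 2 ≤ b) (hk : 1 ≤ k) :
    (k + 1).centralBinom * (a + b).choose a < 2 * (a + b + 2 * k).choose (a + k) := by
  have hstep (j : ℕ) (hj : (j + 1).centralBinom * (a + b).choose a ≤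
      2 * (a + b + 2 * j).choose (a + j)) :
      (j + 2).centralBinom * (a + b).choose a <
        2 * (a + b + 2 * (j + 1)).choose (a + (j + 1)) := by
    have hratio : (j + 2).centralBinom * (a + b + 2 * j).choose (a + j) <
        (j + 1).centralBinom * (a + b + 2 * (j + 1)).choose (a + (j + 1)) := by
      convert centralBinom_succ_mul_choose_lt (k := j) (a := a + j) (b := b + j) (by omega)
        (by omega) using 3 <;> ring
    refine lt_of_mul_lt_mul_left (a := (j + 1).centralBinom) ?_ (Nat.zero_le _)
    calc (j + 1).centralBinom * ((j + 2).centralBinom * (a + b).choose a)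
        = (j + 2).centralBinom * ((j + 1).centralBinom * (a + b).choose a) := by ring
      _ ≤ (j + 2).centralBinom * (2 * (a + b + 2 * j).choose (a + j)) := by gcongr
      _ = 2 * ((j + 2).centralBinom * (a + b + 2 * j).choose (a + j)) := by ring
      _ < 2 * ((j + 1).centralBinom * (a + b + 2 * (j + 1)).choose (a + (j + 1))) := by gcongr
      _ = (j + 1).centralBinom * (2 * (a + b + 2 * (j + 1)).choose (a + (j + 1))) := by ring
  induction k, hk using Nat.le_induction with
  | base => exact hstep 0 (by simp [Nat.centralBinom])
  | succ k _ ih => exact hstep k ih.le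

lemma centralBinom_mul_choose_lt_of_le {n p k : ℕ} (hk : 2 ≤ k) (hkp : k ≤ p) (hp : p < n)
    (hkn : 2 * k ≤ n) (h1 : 2 * p + 1 ≠ n) (h2 : 2 * p ≠ n) (h3 : 2 * p ≠ n + 1) :
    k.centralBinom * (n - 2 * k).choose (p - k) < 2 * (n - 2).choose (p - 1) := by
  obtain hlt | hle := lt_or_ge (n - 2 * k) (p - k)
  · rw [Nat.choose_eq_zero_of_lt hlt, mul_zero]
    exact Nat.mul_pos two_pos (Nat.choose_pos (by omega))
  obtain ⟨j, rfl⟩ := Nat.exists_eq_add_of_le' hk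
  obtain ⟨a, rfl⟩ := Nat.exists_eq_add_of_le' hkp
  obtain ⟨b, rfl⟩ : ∃ b, n = a + b + 2 * (j + 2) := ⟨n - 2 * (j + 2) - a, by omega⟩
  rw [show a + b + 2 * (j + 2) - 2 * (j + 2) = a + b by omega,
    show a + (j + 2) - (j + 2) = a by omega,
    show a + b + 2 * (j + 2) - 2 = a + b + 2 * (j + 1) by omega,
    show a + (j + 2) - 1 = a + (j + 1) by omega]
  obtain hab | hba : a + 2 ≤ b ∨ b + 2 ≤ a := by omega
  · exact centralBinom_mul_choose_lt hab (by omega)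
  · have h := centralBinom_mul_choose_lt hba (Nat.le_add_left 1 j)
    rwa [add_comm b a, ← Nat.choose_symm_add,
      Nat.choose_symm_of_eq_add (show a + b + 2 * (j + 1) = b + (j + 1) + (a + (j + 1)) by ring)]
      at h

end Binomial

section IntersectionNumber

open Finset

variable {ι : Type*}

lemma card_symmDiff_eq_add [DecidableEq ι] (s t : Finset ι) :
    #(symmDiff s t) = #(s \ t) + #(t \ s) :=
  card_union_of_disjoint disjoint_sdiff_sdiff

lemma card_eq_and_card_symmDiff_eq_iff [DecidableEq ι] {s t : Finset ι} {i j l : ℕ}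
    (hs : #s = i + j) :
    #t = i + l ∧ #(symmDiff t s) = j + l ↔ #(t ∩ s) = i ∧ #(t \ s) = l := by
  have hs' := card_inter_add_card_sdiff s t
  have ht := card_inter_add_card_sdiff t s
  rw [inter_comm] at hs'
  rw [card_symmDiff_eq_add]
  omega

lemma card_filter_card_inter_card_sdiff [Fintype ι] [DecidableEq ι] (s : Finset ι) (i l : ℕ) :
    #{t : Finset ι | #(t ∩ s) = i ∧ #(t \ s) = l} =
      (#s).choose i * (Fintype.card ι - #s).choose l := by
  rw [← card_compl, ← card_powersetCard, ← card_powersetCard, ← card_product]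
  have hsplit {u v : Finset ι} (hu : u ⊆ s) (hv : v ⊆ sᶜ) :
      (u ∪ v) ∩ s = u ∧ (u ∪ v) \ s = v := by
    constructor <;> grind [mem_compl]
  refine card_nbij' (fun t ↦ (t ∩ s, t \ s)) (fun u ↦ u.1 ∪ u.2) ?_ ?_ ?_ ?_
  · intro t ht
    simp_all [mem_powersetCard, sdiff_eq_inter_compl]
  · rintro ⟨u, v⟩ huv
    simp only [coe_product, Set.mem_prod, mem_coe, mem_powersetCard] at huv
    obtain ⟨⟨hu, hui⟩, hv, hvl⟩ := huv
    simp [hsplit hu hv, hui, hvl]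
  · intro t _
    exact sup_inf_sdiff t s
  · rintro ⟨u, v⟩ huv
    simp only [coe_product, Set.mem_prod, mem_coe, mem_powersetCard] at huv
    exact Prod.ext_iff.mpr (hsplit huv.1.1 huv.2.1)

variable {α : Type*} [Fintype ι]

/-- The set of coordinates in which two words differ. -/
def diffSet [DecidableEq α] (x y : ι → α) : Finset ι := {i | x i ≠ y i}

/-- The number of words at distance `a` from `x` and `b` from `y`, that is, the intersection number
of the Hamming scheme at the pair `x`, `y`. -/
def intersectionNumber [DecidableEq ι] [Fintype α] [DecidableEq α] (x y : ι → α) (a b : ℕ) : ℕ :=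
  #{z | hammingDist x z = a ∧ hammingDist z y = b}

lemma card_diffSet [DecidableEq α] (x y : ι → α) : #(diffSet x y) = hammingDist x y := rfl

lemma diffSet_bijective (x : ι → ZMod 2) : Function.Bijective (diffSet x) := by
  classical
  rw [Fintype.bijective_iff_injective_and_card]
  have hbit : ∀ u v w : ZMod 2, (u ≠ v ↔ u ≠ w) → v = w := by decide
  refine ⟨fun y z h ↦ funext fun i ↦ hbit (x i) _ _ ?_, by simp⟩
  simpa [diffSet] using Finset.ext_iff.mp h i

lemma diffSet_eq_symmDiff [DecidableEq ι] (x y z : ι → ZMod 2) :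
    diffSet z y = symmDiff (diffSet x z) (diffSet x y) := by
  have hbit : ∀ u v w : ZMod 2, w ≠ v ↔ u ≠ w ∧ ¬u ≠ v ∨ u ≠ v ∧ ¬u ≠ w := by decide
  ext i
  simpa only [diffSet, mem_symmDiff, mem_filter_univ] using hbit (x i) (y i) (z i)

lemma intersectionNumber_eq_choose_mul_choose [DecidableEq ι] {x y : ι → ZMod 2} {i j : ℕ}
    (h : hammingDist x y = i + j) (l : ℕ) :
    intersectionNumber x y (i + l) (j + l) =
      (i + j).choose i * (Fintype.card ι - (i + j)).choose l := by
  have hxy : #(diffSet x y) = i + j := (card_diffSet x y).trans h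
  rw [← hxy, ← card_filter_card_inter_card_sdiff]
  refine card_bijective _ (diffSet_bijective x) fun z ↦ ?_
  simp only [mem_filter_univ, ← card_eq_and_card_symmDiff_eq_iff hxy, ← diffSet_eq_symmDiff,
    card_diffSet]

lemma exists_hammingDist_eq_add (x y z : ι → ZMod 2) :
    ∃ i j l, hammingDist x y = i + j ∧ hammingDist x z = i + l ∧ hammingDist z y = j + l := by
  classical
  simp only [← card_diffSet]
  refine ⟨#(diffSet x y ∩ diffSet x z), #(diffSet x y \ diffSet x z),
    #(diffSet x z \ diffSet x y), (card_inter_add_card_sdiff _ _).symm, ?_, ?_⟩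
  · rw [inter_comm, card_inter_add_card_sdiff]
  · rw [diffSet_eq_symmDiff x y z, card_symmDiff_eq_add, add_comm]

lemma exists_of_intersectionNumber_ne_zero [DecidableEq ι] {x y : ι → ZMod 2} {a b : ℕ}
    (h : intersectionNumber x y a b ≠ 0) :
    ∃ i j l, hammingDist x y = i + j ∧ a = i + l ∧ b = j + l := by
  obtain ⟨z, hz⟩ := card_ne_zero.mp h
  obtain ⟨rfl, rfl⟩ := (mem_filter_univ z).mp hz
  exact exists_hammingDist_eq_add x y z

lemma exists_hammingDist_eq_and_eq_one {x y : ι → ZMod 2} {k : ℕ}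
    (h : hammingDist x y = k + 1) : ∃ z, hammingDist x z = k ∧ hammingDist z y = 1 := by
  classical
  have hN : intersectionNumber x y k 1 ≠ 0 := by
    rw [show intersectionNumber x y k 1 = _ from intersectionNumber_eq_choose_mul_choose h 0]
    simp
  obtain ⟨z, hz⟩ := card_ne_zero.mp hN
  exact ⟨z, (mem_filter_univ z).mp hz⟩

end IntersectionNumber

section Recognition

variable {ι : Type*} [Fintype ι] [DecidableEq ι] {x y : ι → ZMod 2} {m p : ℕ}

lemma hammingDist_eq_two_iff (hp0 : 0 < p) (hp : p < Fintype.card ι)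
    (h1 : 2 * p + 1 ≠ Fintype.card ι) (h2 : 2 * p ≠ Fintype.card ι)
    (h3 : 2 * p ≠ Fintype.card ι + 1) :
    hammingDist x y = 2 ↔
      x ≠ y ∧ intersectionNumber x y p p = 2 * (Fintype.card ι - 2).choose (p - 1) := by
  constructor
  · intro h
    have hN := intersectionNumber_eq_choose_mul_choose (i := 1) (j := 1) h (p - 1)
    rw [Nat.add_sub_cancel' hp0] at hN
    exact ⟨hammingDist_pos.mp (by omega), hN⟩
  · rintro ⟨hxy, hN⟩
    have hN0 : intersectionNumber x y p p ≠ 0 :=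
      hN ▸ mul_ne_zero two_ne_zero (Nat.choose_ne_zero (by omega))
    obtain ⟨k, j, l, hd, hik, hjk⟩ := exists_of_intersectionNumber_ne_zero hN0
    obtain rfl : k = j := by omega
    have hk0 : 0 < hammingDist x y := hammingDist_pos.mpr hxy
    have hkn : hammingDist x y ≤ Fintype.card ι := hammingDist_le_card_fintype
    by_contra hne
    have hlt := centralBinom_mul_choose_lt_of_le (k := k) (by omega) (by omega) hp (by omega)
      h1 h2 h3
    have hNk := intersectionNumber_eq_choose_mul_choose hd l
    rw [← hik, hN, ← two_mul, ← Nat.centralBinom, show l = p - k by omega] at hNk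
    exact hlt.ne' hNk

lemma intersectionNumber_two_of_hammingDist_eq (h : hammingDist x y = m) :
    intersectionNumber x y 2 (m + 2) = (Fintype.card ι - m).choose 2 := by
  simpa using intersectionNumber_eq_choose_mul_choose (i := 0) (j := m) (by simpa using h) 2

lemma hammingDist_eq_iff_ne_add_two (hm : m + 2 ≤ Fintype.card ι)
    (h2 : 2 * (m + 2) ≠ Fintype.card ι) :
    hammingDist x y = m ↔ hammingDist x y ≠ m + 2 ∧
      intersectionNumber x y 2 (m + 2) = (Fintype.card ι - m).choose 2 := by
  refine ⟨fun h ↦ ⟨by omega, intersectionNumber_two_of_hammingDist_eq h⟩, ?_⟩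
  rintro ⟨hne, hN⟩
  have hpos : (Fintype.card ι - m).choose 2 ≠ 0 := Nat.choose_ne_zero (by omega)
  obtain ⟨i, j, l, hd, hi, hj⟩ := exists_of_intersectionNumber_ne_zero (hN ▸ hpos)
  by_contra hdm
  obtain ⟨rfl, rfl, rfl⟩ : i = 2 ∧ j = m + 2 ∧ l = 0 := by omega
  have hN4 := intersectionNumber_eq_choose_mul_choose hd 0
  rw [add_zero, add_zero, hN, Nat.choose_zero_right, mul_one] at hN4
  have hcard : Fintype.card ι - m - 1 = m + 3 := strictMono_succ_choose_two.injective <| by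
    convert hN4 using 2 <;> omega
  omega

lemma hammingDist_eq_iff_ne_add_four (hm : m + 2 ≤ Fintype.card ι) :
    hammingDist x y = m ↔ hammingDist x y ≠ m + 2 ∧ hammingDist x y ≠ m + 4 ∧
      intersectionNumber x y 2 (m + 2) ≠ 0 := by
  refine ⟨fun h ↦ ⟨by omega, by omega, ?_⟩, ?_⟩
  · rw [intersectionNumber_two_of_hammingDist_eq h]
    exact Nat.choose_ne_zero (by omega)
  · rintro ⟨hne2, hne4, hN⟩
    obtain ⟨i, j, l, hd, hi, hj⟩ := exists_of_intersectionNumber_ne_zero hN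
    omega

end Recognition

/-- The permutation `φ` of a set of words preserves the Hamming distance `k` in both directions. -/
def PreservesDist {ι α : Type*} [Fintype ι] [DecidableEq α] (φ : Equiv.Perm (ι → α)) (k : ℕ) :
    Prop :=
  ∀ x y, hammingDist (φ x) (φ y) = k ↔ hammingDist x y = k

namespace PreservesDist

section Alphabet

variable {ι α : Type*} [Fintype ι] [DecidableEq α] {φ : Equiv.Perm (ι → α)} {a b k : ℕ}

lemma symm (h : PreservesDist φ k) : PreservesDist φ.symm k := fun x y ↦ by
  simpa using (h (φ.symm x) (φ.symm y)).symm

lemma of_imp [Finite α] (h : ∀ x y, hammingDist x y = k → hammingDist (φ x) (φ y) = k) :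
    PreservesDist φ k := fun x y ↦ by
  refine ⟨fun hxy ↦ ?_, h x y⟩
  have hinv := Equiv.Perm.perm_symm_on_of_perm_on_finite (f := φ.prodCongr φ)
    (p := fun u ↦ hammingDist u.1 u.2 = k) (fun u ↦ h u.1 u.2) (x := (φ x, φ y)) hxy
  simpa using hinv

lemma intersectionNumber_map [DecidableEq ι] [Fintype α] (ha : PreservesDist φ a)
    (hb : PreservesDist φ b) (x y : ι → α) :
    intersectionNumber (φ x) (φ y) a b = intersectionNumber x y a b :=
  (Finset.card_equiv φ fun z ↦ by simp [ha x z, hb z y]).symm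

end Alphabet

variable {ι : Type*} [Fintype ι] {φ : Equiv.Perm (ι → ZMod 2)} {m p : ℕ}

lemma two (hp0 : 0 < p) (hp : p < Fintype.card ι) (h1 : 2 * p + 1 ≠ Fintype.card ι)
    (h2 : 2 * p ≠ Fintype.card ι) (h3 : 2 * p ≠ Fintype.card ι + 1) (hφ : PreservesDist φ p) :
    PreservesDist φ 2 := fun x y ↦ by
  classical
  rw [hammingDist_eq_two_iff hp0 hp h1 h2 h3, hammingDist_eq_two_iff hp0 hp h1 h2 h3,
    φ.injective.ne_iff, hφ.intersectionNumber_map hφ]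

lemma of_add_two (hm : m + 2 ≤ Fintype.card ι) (h2 : 2 * (m + 2) ≠ Fintype.card ι)
    (htwo : PreservesDist φ 2) (hφ : PreservesDist φ (m + 2)) : PreservesDist φ m := fun x y ↦ by
  classical
  rw [hammingDist_eq_iff_ne_add_two hm h2, hammingDist_eq_iff_ne_add_two hm h2,
    htwo.intersectionNumber_map hφ, ne_eq, hφ x y]

lemma of_add_four (hm : m + 2 ≤ Fintype.card ι) (htwo : PreservesDist φ 2)
    (hφ2 : PreservesDist φ (m + 2)) (hφ4 : PreservesDist φ (m + 4)) :
    PreservesDist φ m := fun x y ↦ by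
  classical
  rw [hammingDist_eq_iff_ne_add_four hm, hammingDist_eq_iff_ne_add_four hm,
    htwo.intersectionNumber_map hφ2, ne_eq, ne_eq, hφ2 x y, hφ4 x y]

lemma one_of_consecutive_odd (htwo : PreservesDist φ 2) (hm : 2 * m + 1 ≤ Fintype.card ι)
    (h1 : PreservesDist φ (2 * m + 1)) (h3 : PreservesDist φ (2 * m + 3)) :
    PreservesDist φ 1 := by
  induction m with
  | zero => exact h1
  | succ m ih => exact ih (by omega) (htwo.of_add_four hm h1 h3) h1

lemma one_of_odd (hodd : Odd p) (hp : p ≤ Fintype.card ι) (h2 : 2 * p ≠ Fintype.card ι)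
    (htwo : PreservesDist φ 2) (hφ : PreservesDist φ p) : PreservesDist φ 1 := by
  obtain ⟨_ | m, rfl⟩ := hodd
  · exact hφ
  · exact htwo.one_of_consecutive_odd (by omega) (of_add_two hp h2 htwo hφ) hφ

lemma hammingDist_map_le (h : PreservesDist φ 1) (x y : ι → ZMod 2) :
    hammingDist (φ x) (φ y) ≤ hammingDist x y := by
  classical
  induction hk : hammingDist x y generalizing y with
  | zero => simp [hammingDist_eq_zero.mp hk]
  | succ k ih =>
    obtain ⟨z, hxz, hzy⟩ := exists_hammingDist_eq_and_eq_one hk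
    calc hammingDist (φ x) (φ y) ≤ hammingDist (φ x) (φ z) + hammingDist (φ z) (φ y) :=
          hammingDist_triangle _ _ _
      _ ≤ k + 1 := add_le_add (ih z hxz) ((h z y).mpr hzy).le

lemma hammingDist_map_eq (h : PreservesDist φ 1) (x y : ι → ZMod 2) :
    hammingDist (φ x) (φ y) = hammingDist x y :=
  (h.hammingDist_map_le x y).antisymm <| by simpa using h.symm.hammingDist_map_le (φ x) (φ y)

end PreservesDist

theorem pIsometry_isIsometry_of_odd_general {ι : Type*} [Fintype ι] {p : ℕ} (hodd : Odd p)
    (hp : p < Fintype.card ι) (h1 : 2 * p + 1 ≠ Fintype.card ι) (h2 : 2 * p ≠ Fintype.card ι)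
    (h3 : 2 * p ≠ Fintype.card ι + 1) (φ : Equiv.Perm (ι → ZMod 2))
    (hφ : ∀ x y, hammingDist x y = p → hammingDist (φ x) (φ y) = p) (x y : ι → ZMod 2) :
    hammingDist (φ x) (φ y) = hammingDist x y := by
  have hdist : PreservesDist φ p := .of_imp hφ
  have htwo : PreservesDist φ 2 := .two hodd.pos hp h1 h2 h3 hdist
  have hone : PreservesDist φ 1 := .one_of_odd hodd hp.le h2 htwo hdist
  exact hone.hammingDist_map_eq x y

/-- Krasin's theorem: if `p` is odd with `1 ≤ p ≤ n`, `2p ≠ n-1`, `2p ≠ n`, `2p ≠ n+1`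
and `p ≠ n`, then every `p`-isometry of the Boolean cube `C_n` is an isometry. -/
theorem pIsometry_isIsometry_of_odd (n p : ℕ) (hn : 1 ≤ n)
    (hp1 : 1 ≤ p) (hpn : p ≤ n) (hodd : Odd p)
    (h1 : 2 * p + 1 ≠ n) (h2 : 2 * p ≠ n) (h3 : 2 * p ≠ n + 1) (h4 : p ≠ n)
    (φ : (Fin n → ZMod 2) → Fin n → ZMod 2) (hbij : Function.Bijective φ)
    (hφ : ∀ x y, hammingDist x y = p → hammingDist (φ x) (φ y) = p) :
    ∀ x y, hammingDist (φ x) (φ y) = hammingDist x y := by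
  rw [← Fintype.card_fin n] at h1 h2 h3
  exact pIsometry_isIsometry_of_odd_general hodd (by simpa using hpn.lt_of_ne h4) h1 h2 h3
    (Equiv.ofBijective φ hbij) hφ
end

section
/- Let p be an even integer with 2 ≤ p ≤ n such that 2p ≠ n−1, 2p ≠ n, 2p ≠ n+1 and p ≠ n. Then every p-isometry of C_n is an even isometry. -/
/-!
For words `x`, `y` of length `n` at distance `2 * k` with `k ≤ p`, the number of words at distance
`p` from both is `(2 * k).choose k * (n - 2 * k).choose (p - k)`; at any other distance there are
none. When `0 < p < n` and `2 p ≠ n - 1, n, n + 1`, this number is strictly largest at `k = 1`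
among all `k ≥ 1`. An injective map preserving distance `p` also reflects it, the cube being
finite, so it preserves these numbers and therefore distance `2`. Any two words at even distance
are joined by a shortest path with steps of length `2`, so even distances do not increase;
finiteness again turns this into equality.
-/

open Finset
open scoped symmDiff

namespace BooleanCube

lemma centralBinom_succ_mul_centralBinom_succ_le (k q : ℕ) :
    (k + 1).centralBinom * (q + 1).centralBinom ≤ 2 * (k + q + 1).centralBinom := by
  induction q with
  | zero => simp [Nat.centralBinom, mul_comm]
  | succ q ih =>
    have hq := Nat.succ_mul_centralBinom_succ (q + 1)
    have hkq := Nat.succ_mul_centralBinom_succ (k + q + 1)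
    have hratio : (k + q + 2) * (2 * (q + 1) + 1) ≤ (q + 2) * (2 * (k + q + 1) + 1) := by nlinarith
    refine Nat.le_of_mul_le_mul_left (c := (q + 2) * (k + q + 2)) ?_ (by positivity)
    calc (q + 2) * (k + q + 2) * ((k + 1).centralBinom * (q + 1 + 1).centralBinom)
        = (k + q + 2) * (k + 1).centralBinom * ((q + 1 + 1) * (q + 1 + 1).centralBinom) := by ring
      _ = 2 * ((k + q + 2) * (2 * (q + 1) + 1))
          * ((k + 1).centralBinom * (q + 1).centralBinom) := by rw [hq]; ring
      _ ≤ 2 * ((q + 2) * (2 * (k + q + 1) + 1)) * (2 * (k + q + 1).centralBinom) := by gcongr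
      _ = 2 * (q + 2) * ((k + q + 1 + 1) * (k + q + 1 + 1).centralBinom) := by rw [hkq]; ring
      _ = (q + 2) * (k + q + 2) * (2 * (k + (q + 1) + 1).centralBinom) := by ring_nf

lemma choose_mul_add_two_eq_succ_mul_centralBinom (q : ℕ) :
    (q + (q + 2)).choose q * (q + 2) = (q + 1) * (q + 1).centralBinom := by
  have h := Nat.choose_succ_right_eq (q + (q + 2)) q
  rw [Nat.add_sub_cancel_left] at h
  rw [← h, Nat.centralBinom, mul_comm, show 2 * (q + 1) = q + (q + 2) by ring]

lemma choose_add_mul_succ (a b : ℕ) :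
    (a + b).choose a * (a + b + 1) = (a + (b + 1)).choose a * (b + 1) := by
  rw [Nat.choose_mul_succ_eq, show a + b + 1 - a = b + 1 by lia, add_assoc]

lemma centralBinom_mul_choose_add_two_lt {s : ℕ} (hs : 1 ≤ s) (a : ℕ) :
    (s + 1).centralBinom * (a + (a + 2)).choose a < 2 * (s + a + (s + a + 2)).choose (s + a) := by
  have ha := choose_mul_add_two_eq_succ_mul_centralBinom a
  have hsa := choose_mul_add_two_eq_succ_mul_centralBinom (s + a)
  have hpos := Nat.centralBinom_pos (s + a + 1)
  have hratio : (s + a + 2) * (a + 1) < (a + 2) * (s + a + 1) := by nlinarith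
  refine Nat.lt_of_mul_lt_mul_left (a := (a + 2) * (s + a + 2)) ?_
  calc (a + 2) * (s + a + 2) * ((s + 1).centralBinom * (a + (a + 2)).choose a)
      = (s + a + 2) * (s + 1).centralBinom * ((a + (a + 2)).choose a * (a + 2)) := by ring
    _ = (s + a + 2) * (a + 1) * ((s + 1).centralBinom * (a + 1).centralBinom) := by rw [ha]; ring
    _ ≤ (s + a + 2) * (a + 1) * (2 * (s + a + 1).centralBinom) := by
      exact Nat.mul_le_mul_left _ (centralBinom_succ_mul_centralBinom_succ_le s a)
    _ < (a + 2) * (s + a + 1) * (2 * (s + a + 1).centralBinom) := by gcongr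
    _ = 2 * (a + 2) * ((s + a + 1) * (s + a + 1).centralBinom) := by ring
    _ = (a + 2) * (s + a + 2) * (2 * (s + a + (s + a + 2)).choose (s + a)) := by rw [← hsa]; ring

lemma centralBinom_mul_choose_lt {s a b : ℕ} (hs : 1 ≤ s) (hab : a + 2 ≤ b) :
    (s + 1).centralBinom * (a + b).choose a < 2 * (s + a + (s + b)).choose (s + a) := by
  induction b, hab using Nat.le_induction with
  | base => exact centralBinom_mul_choose_add_two_lt hs a
  | succ b hab ih =>
    have hb := choose_add_mul_succ a b
    have hsb := choose_add_mul_succ (s + a) (s + b)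
    have hratio : (s + b + 1) * (a + b + 1) ≤ (b + 1) * (s + a + (s + b) + 1) := by nlinarith
    refine Nat.lt_of_mul_lt_mul_left (a := (b + 1) * (s + b + 1)) ?_
    calc (b + 1) * (s + b + 1) * ((s + 1).centralBinom * (a + (b + 1)).choose a)
        = (s + b + 1) * (s + 1).centralBinom * ((a + (b + 1)).choose a * (b + 1)) := by ring
      _ = (s + b + 1) * (a + b + 1) * ((s + 1).centralBinom * (a + b).choose a) := by
        rw [← hb]; ring
      _ < (s + b + 1) * (a + b + 1) * (2 * (s + a + (s + b)).choose (s + a)) := by gcongr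
      _ ≤ (b + 1) * (s + a + (s + b) + 1) * (2 * (s + a + (s + b)).choose (s + a)) := by gcongr
      _ = 2 * (b + 1) * ((s + a + (s + b)).choose (s + a) * (s + a + (s + b) + 1)) := by ring
      _ = (b + 1) * (s + b + 1) * (2 * (s + a + (s + (b + 1))).choose (s + a)) := by
        rw [hsb, add_assoc s b 1]; ring

lemma choose_mul_choose_sub_lt {n p k : ℕ} (hk : 2 ≤ k) (hkp : k ≤ p) (hkpn : k + p ≤ n)
    (hp : 2 * p + 2 ≤ n ∨ n + 2 ≤ 2 * p) :
    (2 * k).choose k * (n - 2 * k).choose (p - k) < 2 * (n - 2).choose (p - 1) := by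
  obtain ⟨s, rfl⟩ := Nat.exists_eq_add_of_le' (show 1 ≤ k by lia)
  obtain ⟨a, rfl⟩ := Nat.exists_eq_add_of_le hkp
  obtain ⟨b, rfl⟩ := Nat.exists_eq_add_of_le hkpn
  have hs : 1 ≤ s := by lia
  rw [show s + 1 + (s + 1 + a) + b - 2 * (s + 1) = a + b by lia, Nat.add_sub_cancel_left,
    show s + 1 + (s + 1 + a) + b - 2 = s + a + (s + b) by lia,
    show s + 1 + a - 1 = s + a by lia, ← Nat.centralBinom_eq_two_mul_choose]
  rcases hp with hp | hp
  · exact centralBinom_mul_choose_lt hs (by lia)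
  · rw [Nat.choose_symm_add, Nat.choose_symm_add, add_comm a b, add_comm (s + a) (s + b)]
    exact centralBinom_mul_choose_lt hs (by lia)

section FiniteSets

lemma rel_map_iff_of_injective {α : Type*} [Finite α] {r : α → α → Prop} {φ : α → α}
    (hinj : Function.Injective φ) (hφ : ∀ x y, r x y → r (φ x) (φ y)) (x y : α) :
    r (φ x) (φ y) ↔ r x y := by
  refine ⟨fun h => ?_, hφ x y⟩
  let s : Set (α × α) := {q | r q.1 q.2}
  have hφφ : Function.Injective (Prod.map φ φ) := hinj.prodMap hinj
  have hsurj : Set.BijOn (Prod.map φ φ) s s :=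
    (s.toFinite.injOn_iff_bijOn_of_mapsTo fun q hq => hφ q.1 q.2 hq).1 hφφ.injOn
  obtain ⟨q, hq, hqxy⟩ := hsurj.surjOn (show Prod.map φ φ (x, y) ∈ s from h)
  obtain rfl : q = (x, y) := hφφ hqxy
  exact hq

variable {ι : Type*} [DecidableEq ι]

lemma card_symmDiff_add_two_mul_card_inter (D S : Finset ι) :
    #(D ∆ S) + 2 * #(D ∩ S) = #D + #S := by
  have hD := card_inter_add_card_sdiff D S
  have hS := card_inter_add_card_sdiff S D
  rw [symmDiff_def, sup_eq_union, card_union_of_disjoint disjoint_sdiff_sdiff, ← hD, ← hS,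
    inter_comm S D]
  ring

variable [Fintype ι]

lemma card_filter_card_inter_card_sdiff (D : Finset ι) (a b : ℕ) :
    #{S | #(S ∩ D) = a ∧ #(S \ D) = b} = (#D).choose a * (#Dᶜ).choose b := by
  have hsplit : ∀ A B, A ⊆ D → B ⊆ Dᶜ → (A ∪ B) ∩ D = A ∧ (A ∪ B) \ D = B := by
    grind [mem_compl]
  rw [← card_powersetCard, ← card_powersetCard, ← card_product]
  refine card_nbij' (fun S => (S ∩ D, S \ D)) (fun P => P.1 ∪ P.2) ?_ ?_ ?_ ?_
  · intro S hS
    simpa [mem_powersetCard, subset_compl_iff_disjoint_right, sdiff_disjoint] using hS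
  · rintro ⟨A, B⟩ hAB
    simp only [coe_product, Set.mem_prod, mem_coe, mem_powersetCard] at hAB
    obtain ⟨⟨hA, rfl⟩, hB, rfl⟩ := hAB
    simp [hsplit A B hA hB]
  · intro S _
    exact (union_comm _ _).trans (sdiff_union_inter S D)
  · rintro ⟨A, B⟩ hAB
    simp only [coe_product, Set.mem_prod, mem_coe, mem_powersetCard] at hAB
    exact Prod.ext_iff.2 (hsplit A B hAB.1.1 hAB.2.1)

lemma card_filter_card_eq_card_symmDiff_eq {D : Finset ι} {p k : ℕ} (hD : #D = 2 * k)
    (hkp : k ≤ p) :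
    #{S | #S = p ∧ #(D ∆ S) = p} =
      (2 * k).choose k * (Fintype.card ι - 2 * k).choose (p - k) := by
  rw [← hD, ← card_compl, ← card_filter_card_inter_card_sdiff]
  congr 1
  ext S
  have hsymm := card_symmDiff_add_two_mul_card_inter D S
  have hS := card_inter_add_card_sdiff S D
  rw [inter_comm] at hsymm
  simp only [mem_filter_univ]
  lia

end FiniteSets

variable {ι : Type*} [Fintype ι] {x y z : ι → ZMod 2} {p k : ℕ}

/-- The set of coordinates in which the words `x` and `y` differ. By definition its cardinality is
`hammingDist x y`; as a function of `y` it identifies the Boolean cube with `Finset ι`. -/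
def diffSet (x y : ι → ZMod 2) : Finset ι := {i | x i ≠ y i}

lemma card_diffSet (x y : ι → ZMod 2) : #(diffSet x y) = hammingDist x y := rfl

lemma diffSet_bijective (x : ι → ZMod 2) : Function.Bijective (diffSet x) := by
  classical
  have eq_of_ne : ∀ a b c : ZMod 2, (a ≠ b ↔ a ≠ c) → b = c := by decide
  refine ⟨fun y z h => funext fun i => eq_of_ne (x i) _ _ ?_,
    fun S => ⟨fun i => if i ∈ S then x i + 1 else x i, ?_⟩⟩
  · simpa only [diffSet, mem_filter_univ] using Finset.ext_iff.1 h i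
  · ext i
    by_cases hi : i ∈ S <;> simp [diffSet, hi]

lemma diffSet_eq_symmDiff [DecidableEq ι] (x y z : ι → ZMod 2) :
    diffSet y z = diffSet x y ∆ diffSet x z := by
  have ne_iff : ∀ a b c : ZMod 2, b ≠ c ↔ a ≠ b ∧ ¬a ≠ c ∨ a ≠ c ∧ ¬a ≠ b := by decide
  ext i
  simpa only [diffSet, mem_symmDiff, mem_filter_univ] using ne_iff (x i) (y i) (z i)

lemma hammingDist_add_two_mul_card_inter [DecidableEq ι] (x y z : ι → ZMod 2) :
    hammingDist y z + 2 * #(diffSet x y ∩ diffSet x z) = hammingDist x y + hammingDist x z := by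
  rw [← card_diffSet y, diffSet_eq_symmDiff x]
  exact card_symmDiff_add_two_mul_card_inter _ _

lemma exists_hammingDist_eq_of_eq_add {a b : ℕ} (h : hammingDist x y = a + b) :
    ∃ z, hammingDist x z = a ∧ hammingDist y z = b := by
  classical
  obtain ⟨S, hS, hcard⟩ := exists_subset_card_eq (show a ≤ #(diffSet x y) by
    rw [card_diffSet]; lia)
  obtain ⟨z, rfl⟩ := (diffSet_bijective x).surjective S
  have hz := hammingDist_add_two_mul_card_inter x y z
  rw [inter_eq_right.2 hS] at hz
  rw [card_diffSet] at hcard hz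
  exact ⟨z, hcard, by lia⟩

section Equidistant

variable [DecidableEq ι]

/-- The words at distance `p` from both `x` and `y`, i.e. the common neighbours of `x` and `y` in
the graph joining words at distance `p`. -/
def equidistant (p : ℕ) (x y : ι → ZMod 2) : Finset (ι → ZMod 2) :=
  {z | hammingDist x z = p ∧ hammingDist y z = p}

lemma mem_equidistant : z ∈ equidistant p x y ↔ hammingDist x z = p ∧ hammingDist y z = p :=
  mem_filter_univ z

lemma card_equidistant (hxy : hammingDist x y = 2 * k) (hkp : k ≤ p) :
    #(equidistant p x y) = (2 * k).choose k * (Fintype.card ι - 2 * k).choose (p - k) := by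
  rw [← card_filter_card_eq_card_symmDiff_eq hxy hkp]
  refine card_bijective (diffSet x) (diffSet_bijective x) fun z => ?_
  rw [mem_equidistant, mem_filter_univ, ← card_diffSet y, diffSet_eq_symmDiff x y z, card_diffSet]
  rfl

lemma exists_hammingDist_eq_two_mul_of_mem_equidistant (hz : z ∈ equidistant p x y) :
    ∃ k, k ≤ p ∧ k + p ≤ Fintype.card ι ∧ hammingDist x y = 2 * k := by
  obtain ⟨hxz, hyz⟩ := mem_equidistant.1 hz
  have hdist := hammingDist_add_two_mul_card_inter x y z
  have hunion := card_union_add_card_inter (diffSet x y) (diffSet x z)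
  have hle := card_le_univ (diffSet x y ∪ diffSet x z)
  have hinter := card_le_card (inter_subset_right (s₁ := diffSet x y) (s₂ := diffSet x z))
  simp only [card_diffSet] at hunion hinter
  exact ⟨#(diffSet x y ∩ diffSet x z), by lia, by lia, by lia⟩

lemma card_equidistant_lt_of_hammingDist_eq_two {x' y' : ι → ZMod 2}
    (hp : 0 < p) (hp' : 2 * p + 2 ≤ Fintype.card ι ∨ Fintype.card ι + 2 ≤ 2 * p)
    (hpn : p < Fintype.card ι)
    (hxy : hammingDist x y = 2) (hne : x' ≠ y') (hxy' : hammingDist x' y' ≠ 2) :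
    #(equidistant p x' y') < #(equidistant p x y) := by
  have hcard : #(equidistant p x y) = 2 * (Fintype.card ι - 2).choose (p - 1) :=
    card_equidistant (k := 1) hxy hp
  rcases (equidistant p x' y').eq_empty_or_nonempty with hempty | ⟨z, hz⟩
  · rw [hempty, card_empty, hcard]
    exact Nat.mul_pos two_pos (Nat.choose_pos (by lia))
  · obtain ⟨k, hkp, hkpn, hk⟩ := exists_hammingDist_eq_two_mul_of_mem_equidistant hz
    have hpos := hammingDist_pos.2 hne
    rw [card_equidistant hk hkp, hcard]
    exact choose_mul_choose_sub_lt (by lia) hkp hkpn hp'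

lemma card_equidistant_map {φ : (ι → ZMod 2) → ι → ZMod 2} (hinj : Function.Injective φ)
    (hφ : ∀ x y, hammingDist x y = p → hammingDist (φ x) (φ y) = p) (x y : ι → ZMod 2) :
    #(equidistant p (φ x) (φ y)) = #(equidistant p x y) := by
  have hiff := rel_map_iff_of_injective (r := fun x y => hammingDist x y = p) hinj hφ
  refine (card_bijective φ (Finite.injective_iff_bijective.1 hinj) fun z => ?_).symm
  rw [mem_equidistant, mem_equidistant, hiff, hiff]

end Equidistant

section TwoIsometries

variable {φ : (ι → ZMod 2) → ι → ZMod 2}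

lemma even_hammingDist_map_and_le
    (hφ : ∀ x y, hammingDist x y = 2 → hammingDist (φ x) (φ y) = 2)
    (m : ℕ) (x y : ι → ZMod 2) (hxy : hammingDist x y = 2 * m) :
    Even (hammingDist (φ x) (φ y)) ∧ hammingDist (φ x) (φ y) ≤ 2 * m := by
  classical
  induction m generalizing y with
  | zero => simp_all
  | succ m ih =>
    obtain ⟨z, hxz, hyz⟩ := exists_hammingDist_eq_of_eq_add (a := 2 * m) (b := 2) hxy
    obtain ⟨⟨l, hl⟩, hle⟩ := ih z hxz
    have hstep := hφ y z hyz
    have hdist := hammingDist_add_two_mul_card_inter (φ z) (φ x) (φ y)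
    rw [hammingDist_comm (φ z), hammingDist_comm (φ z), hstep] at hdist
    exact ⟨Nat.even_iff.2 (by lia), by lia⟩

lemma hammingDist_map_eq_of_even (hinj : Function.Injective φ)
    (hφ : ∀ x y, hammingDist x y = 2 → hammingDist (φ x) (φ y) = 2) (hxy : Even (hammingDist x y)) :
    hammingDist (φ x) (φ y) = hammingDist x y := by
  have hmap (m : ℕ) (x y : ι → ZMod 2) (h : Even (hammingDist x y) ∧ hammingDist x y ≤ m) :
      Even (hammingDist (φ x) (φ y)) ∧ hammingDist (φ x) (φ y) ≤ m := by
    obtain ⟨l, hl⟩ := h.1.two_dvd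
    have := even_hammingDist_map_and_le hφ l x y hl
    exact ⟨this.1, by lia⟩
  obtain ⟨heven, hle⟩ := hmap _ x y ⟨hxy, le_rfl⟩
  have hge := (rel_map_iff_of_injective hinj (hmap _) x y).1 ⟨heven, le_rfl⟩
  exact hle.antisymm hge.2

end TwoIsometries

end BooleanCube

open BooleanCube in
theorem pIsometry_isEvenIsometry_of_even_general {ι : Type*} [Fintype ι] (p : ℕ) (hp : 0 < p)
    (hpn : p < Fintype.card ι) (h1 : 2 * p + 1 ≠ Fintype.card ι) (h2 : 2 * p ≠ Fintype.card ι)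
    (h3 : 2 * p ≠ Fintype.card ι + 1)
    (φ : (ι → ZMod 2) → ι → ZMod 2) (hinj : Function.Injective φ)
    (hφ : ∀ x y, hammingDist x y = p → hammingDist (φ x) (φ y) = p) :
    ∀ x y, Even (hammingDist x y) → hammingDist (φ x) (φ y) = hammingDist x y := by
  classical
  refine fun _ _ => hammingDist_map_eq_of_even hinj fun x y hxy => ?_
  by_contra hne
  have hφxy : φ x ≠ φ y := hinj.ne (hammingDist_pos.1 (by lia))
  have hlt := card_equidistant_lt_of_hammingDist_eq_two hp (by lia) hpn hxy hφxy hne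
  exact hlt.ne (card_equidistant_map hinj hφ x y)

/-- If `p` is even with `2 ≤ p ≤ n`, `2p ≠ n-1`, `2p ≠ n`, `2p ≠ n+1` and `p ≠ n`,
then every `p`-isometry of the Boolean cube `C_n` is an even isometry. -/
theorem pIsometry_isEvenIsometry_of_even (n p : ℕ) (hn : 1 ≤ n)
    (hp1 : 2 ≤ p) (hpn : p ≤ n) (heven : Even p)
    (h1 : 2 * p + 1 ≠ n) (h2 : 2 * p ≠ n) (h3 : 2 * p ≠ n + 1) (h4 : p ≠ n)
    (φ : (Fin n → ZMod 2) → Fin n → ZMod 2) (hbij : Function.Bijective φ)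
    (hφ : ∀ x y, hammingDist x y = p → hammingDist (φ x) (φ y) = p) :
    ∀ x y, Even (hammingDist x y) → hammingDist (φ x) (φ y) = hammingDist x y := by
  rw [← Fintype.card_fin n] at hpn h1 h2 h3 h4
  exact pIsometry_isEvenIsometry_of_even_general p (by lia) (by lia) h1 h2 h3 φ hbij.injective hφ
end

section
/- Every 1-isometry of C_n is an isometry. -/
/-!
Two words at distance `k` are joined by a path of `k` steps of length `1`, so a `1`-isometry does
not increase distances. Every pair of words returns to itself under iteration of the bijection, so
its distance cannot drop along the way either.
-/

open Function

section HammingDist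

variable {ι : Type*} [Fintype ι] {β : ι → Type*} [∀ i, DecidableEq (β i)]

theorem hammingDist_update_apply_add_one [DecidableEq ι] {x y : ∀ i, β i} {i : ι}
    (hi : x i ≠ y i) : hammingDist (update x i (y i)) y + 1 = hammingDist x y := by
  have h_erase : ({j | update x i (y i) j ≠ y j} : Finset ι) =
      ({j | x j ≠ y j} : Finset ι).erase i := by
    ext j
    obtain rfl | hj := eq_or_ne j i <;> simp [*]
  rw [hammingDist, hammingDist, h_erase]
  exact Finset.card_erase_add_one (by simpa using hi)

theorem hammingDist_self_update [DecidableEq ι] {x : ∀ i, β i} {i : ι} {a : β i}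
    (ha : x i ≠ a) : hammingDist x (update x i a) = 1 := by
  have h := hammingDist_update_apply_add_one (x := x) (y := update x i a) (i := i)
    (by simpa only [update_self] using ha)
  rw [← h, update_self, hammingDist_self]

theorem exists_hammingDist_eq_one_of_eq_succ {x y : ∀ i, β i} {k : ℕ}
    (hxy : hammingDist x y = k + 1) : ∃ z, hammingDist x z = 1 ∧ hammingDist z y = k := by
  classical
  have hne : x ≠ y := hammingDist_pos.mp (hxy ▸ k.succ_pos)
  obtain ⟨i, hi⟩ := ne_iff.mp hne
  exact ⟨update x i (y i), hammingDist_self_update hi,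
    Nat.succ.inj ((hammingDist_update_apply_add_one hi).trans hxy)⟩

theorem dist_le_mul_hammingDist {α : Type*} [PseudoMetricSpace α] {f : (∀ i, β i) → α} {K : ℝ}
    (hf : ∀ x y, hammingDist x y = 1 → dist (f x) (f y) ≤ K) (x y : ∀ i, β i) :
    dist (f x) (f y) ≤ K * hammingDist x y := by
  induction hk : hammingDist x y generalizing x with
  | zero => simp [hammingDist_eq_zero.mp hk]
  | succ k ih =>
    obtain ⟨z, hxz, hzy⟩ := exists_hammingDist_eq_one_of_eq_succ hk
    calc dist (f x) (f y) ≤ dist (f x) (f z) + dist (f z) (f y) := dist_triangle _ _ _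
      _ ≤ K + K * k := add_le_add (hf x z hxz) (ih z hzy)
      _ = K * (k + 1 : ℕ) := by push_cast; ring

end HammingDist

theorem apply_eq_of_mem_periodicPts_of_forall_apply_le {α R : Type*} [PartialOrder R]
    {f : α → α} {g : α → R} {x : α} (hx : x ∈ periodicPts f) (hg : ∀ y, g (f y) ≤ g y) :
    g (f x) = g x := by
  have h_anti : Antitone fun n => g (f^[n] x) := antitone_nat_of_succ_le fun n => by
    simpa only [iterate_succ_apply'] using hg (f^[n] x)
  obtain ⟨n, hn, hper⟩ := hx
  refine (hg x).antisymm ?_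
  calc g x = g (f^[n] x) := by rw [hper.eq]
    _ ≤ g (f x) := h_anti hn

theorem oneIsometry_isIsometry_general {ι : Type*} [Fintype ι] {β : ι → Type*}
    [∀ i, DecidableEq (β i)] [∀ i, Finite (β i)] {φ : (∀ i, β i) → ∀ i, β i}
    (hinj : Injective φ) (hφ : ∀ x y, hammingDist x y = 1 → hammingDist (φ x) (φ y) = 1)
    (x y : ∀ i, β i) : hammingDist (φ x) (φ y) = hammingDist x y := by
  have h_dist (u v : ∀ i, β i) (huv : hammingDist u v = 1) :
      dist (Hamming.toHamming (φ u)) (Hamming.toHamming (φ v)) ≤ 1 := by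
    simp [Hamming.dist_eq_hammingDist, hφ u v huv]
  have h_le (u v : ∀ i, β i) : hammingDist (φ u) (φ v) ≤ hammingDist u v := by
    simpa [Hamming.dist_eq_hammingDist] using dist_le_mul_hammingDist h_dist u v
  exact apply_eq_of_mem_periodicPts_of_forall_apply_le (g := fun p => hammingDist p.1 p.2)
    ((hinj.prodMap hinj).mem_periodicPts (x, y)) fun p => h_le p.1 p.2

/-- Every `1`-isometry of the Boolean cube `C_n` is an isometry. -/
theorem oneIsometry_isIsometry (n : ℕ) (hn : 1 ≤ n)
    (φ : (Fin n → ZMod 2) → Fin n → ZMod 2) (hbij : Function.Bijective φ)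
    (hφ : ∀ x y, hammingDist x y = 1 → hammingDist (φ x) (φ y) = 1) :
    ∀ x y, hammingDist (φ x) (φ y) = hammingDist x y :=
  oneIsometry_isIsometry_general hbij.injective hφ
end

section
/- Every 2-isometry of C_n is an even isometry. -/
/-!
A pair of words at even distance `2k` is joined by a geodesic of `k` jumps of length two. A map `φ`
preserving distance two sends it to a chain of `k` such jumps, so `φ` does not increase even
distances. Over alphabets with at most two letters it also keeps them even, because the perimeter
of a triangle is even there: in each coordinate, two of the three letters coincide. On a finite set
of words an injective such `φ` is invertible, and `φ⁻¹` preserves distance two as well, since `φ`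
permutes the finitely many pairs at distance two. Hence neither `φ` nor `φ⁻¹` increases an
even distance.
-/

section

variable {ι κ : Type*} [Fintype ι] [Fintype κ] {β : ι → Type*} {γ : κ → Type*}
  [∀ i, DecidableEq (β i)] [∀ j, DecidableEq (γ j)]

theorem exists_hammingDist_eq_and_hammingDist_eq {x y : ∀ i, β i} {a b : ℕ}
    (h : hammingDist x y = a + b) : ∃ z, hammingDist x z = a ∧ hammingDist z y = b := by
  classical
  obtain ⟨s, hs, hsa⟩ : ∃ s ⊆ ({i | x i ≠ y i} : Finset ι), s.card = a :=
    Finset.exists_subset_card_eq ((Nat.le_add_right a b).trans_eq h.symm)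
  have hx : ({i | x i ≠ s.piecewise y x i} : Finset ι) = s := by
    ext i
    by_cases hi : i ∈ s
    · simpa [hi] using hs hi
    · simp [hi]
  have hy : ({i | s.piecewise y x i ≠ y i} : Finset ι) = ({i | x i ≠ y i} : Finset ι) \ s := by
    ext i
    by_cases hi : i ∈ s <;> simp [hi]
  refine ⟨s.piecewise y x, by rw [hammingDist, hx, hsa], ?_⟩
  rw [hammingDist, hy, Finset.card_sdiff_of_subset hs, hsa]
  exact Nat.sub_eq_of_eq_add' h

theorem induction_of_dvd_hammingDist {r : ℕ} {P : (∀ i, β i) → (∀ i, β i) → Prop}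
    (refl : ∀ x, P x x)
    (step : ∀ x z y, hammingDist x z = r → hammingDist x y = r + hammingDist z y → P z y → P x y)
    {x y : ∀ i, β i} (h : r ∣ hammingDist x y) : P x y := by
  obtain ⟨k, hk⟩ := h
  induction k generalizing x with
  | zero => exact hammingDist_eq_zero.mp hk ▸ refl x
  | succ k ih =>
    rw [Nat.mul_succ, Nat.add_comm] at hk
    obtain ⟨z, hxz, hzy⟩ := exists_hammingDist_eq_and_hammingDist_eq hk
    exact step x z y hxz (by rw [hk, hzy]) (ih hzy)

theorem hammingDist_map_le_of_dvd {r : ℕ} {φ : (∀ i, β i) → ∀ j, γ j}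
    (hφ : ∀ x y, hammingDist x y = r → hammingDist (φ x) (φ y) ≤ r)
    {x y : ∀ i, β i} (h : r ∣ hammingDist x y) :
    hammingDist (φ x) (φ y) ≤ hammingDist x y := by
  refine induction_of_dvd_hammingDist
    (P := fun x y => hammingDist (φ x) (φ y) ≤ hammingDist x y) ?refl ?step h
  case refl => simp
  case step =>
    intro x z y hxz hxy ih
    calc hammingDist (φ x) (φ y)
        ≤ hammingDist (φ x) (φ z) + hammingDist (φ z) (φ y) := hammingDist_triangle _ _ _
      _ ≤ r + hammingDist z y := Nat.add_le_add (hφ x z hxz) ih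
      _ = hammingDist x y := hxy.symm

theorem even_hammingDist_add_add [∀ i, Fintype (β i)] (hβ : ∀ i, Fintype.card (β i) ≤ 2)
    (x y z : ∀ i, β i) : Even (hammingDist x y + hammingDist y z + hammingDist x z) := by
  simp only [hammingDist, Finset.card_filter, ← Finset.sum_add_distrib]
  refine Finset.even_sum _ fun i _ => ?_
  have hpigeonhole : ¬ ∃ a b c : β i, a ≠ b ∧ a ≠ c ∧ b ≠ c :=
    Fintype.two_lt_card_iff.not.mp (hβ i).not_gt
  have hletters : x i = y i ∨ x i = z i ∨ y i = z i := by
    by_contra! hne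
    exact hpigeonhole ⟨x i, y i, z i, hne⟩
  grind

theorem even_hammingDist_map_of_dvd [∀ j, Fintype (γ j)] (hγ : ∀ j, Fintype.card (γ j) ≤ 2)
    {r : ℕ} {φ : (∀ i, β i) → ∀ j, γ j}
    (hφ : ∀ x y, hammingDist x y = r → Even (hammingDist (φ x) (φ y)))
    {x y : ∀ i, β i} (h : r ∣ hammingDist x y) : Even (hammingDist (φ x) (φ y)) := by
  refine induction_of_dvd_hammingDist
    (P := fun x y => Even (hammingDist (φ x) (φ y))) ?refl ?step h
  case refl => simp
  case step =>
    intro x z y hxz _ ih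
    exact (Nat.even_add.mp (even_hammingDist_add_add hγ (φ x) (φ z) (φ y))).mp
      ((hφ x z hxz).add ih)

theorem hammingDist_perm_symm_eq [∀ i, Finite (β i)] {r : ℕ}
    {e : Equiv.Perm (∀ i, β i)}
    (he : ∀ x y, hammingDist x y = r → hammingDist (e x) (e y) = r)
    {x y : ∀ i, β i} (h : hammingDist x y = r) : hammingDist (e.symm x) (e.symm y) = r :=
  Equiv.Perm.perm_symm_on_of_perm_on_finite (f := e.prodCongr e)
    (p := fun q => hammingDist q.1 q.2 = r) (fun q => he q.1 q.2) (x := (x, y)) h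

theorem twoIsometry_isEvenIsometry_general [∀ i, Fintype (β i)]
    (hβ : ∀ i, Fintype.card (β i) ≤ 2) {φ : (∀ i, β i) → ∀ i, β i} (hinj : Function.Injective φ)
    (hφ : ∀ x y, hammingDist x y = 2 → hammingDist (φ x) (φ y) = 2)
    {x y : ∀ i, β i} (h : Even (hammingDist x y)) :
    hammingDist (φ x) (φ y) = hammingDist x y := by
  let e : Equiv.Perm (∀ i, β i) := Equiv.ofBijective φ (Finite.injective_iff_bijective.mp hinj)
  have he_symm : ∀ x y, hammingDist x y = 2 → hammingDist (e.symm x) (e.symm y) = 2 :=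
    fun _ _ => hammingDist_perm_symm_eq (e := e) hφ
  have heven : Even (hammingDist (e x) (e y)) :=
    even_hammingDist_map_of_dvd hβ (fun x y hxy => hφ x y hxy ▸ even_two) h.two_dvd
  apply le_antisymm
  · exact hammingDist_map_le_of_dvd (fun x y hxy => (hφ x y hxy).le) h.two_dvd
  · calc hammingDist x y
        = hammingDist (e.symm (e x)) (e.symm (e y)) := by simp only [e.symm_apply_apply]
      _ ≤ hammingDist (e x) (e y) :=
        hammingDist_map_le_of_dvd (fun x y hxy => (he_symm x y hxy).le) heven.two_dvd

end

/-- Every `2`-isometry of the Boolean cube `C_n` is an even isometry. -/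
theorem twoIsometry_isEvenIsometry (n : ℕ) (hn : 1 ≤ n)
    (φ : (Fin n → ZMod 2) → Fin n → ZMod 2) (hbij : Function.Bijective φ)
    (hφ : ∀ x y, hammingDist x y = 2 → hammingDist (φ x) (φ y) = 2) :
    ∀ x y, Even (hammingDist x y) → hammingDist (φ x) (φ y) = hammingDist x y :=
  fun _ _ h => twoIsometry_isEvenIsometry_general (fun _ => (ZMod.card 2).le) hbij.injective hφ h
end

section
/- Let 1 ≤ p ≤ n. Every {p, n}-isometry of C_n is a {p, n−p, n}-isometry; that is, if a bijection φ of C_n preserves the distances p and n, then φ also preserves the distance n−p. -/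
/-! If `y` and `z` are antipodal binary words of length `n`, then every coordinate of `x` agrees
with exactly one of `y` and `z`, so `d(x, y) + d(x, z) = n`. Replacing `y` by its antipode thus
exchanges the distances `n - p` and `p`, and a map that preserves distance `n` respects
antipodes. -/

section

variable {ι κ : Type*} [Fintype ι] [Fintype κ] {α : ι → Type*} {β : κ → Type*}
  [∀ i, DecidableEq (α i)] [∀ k, DecidableEq (β k)]

theorem hammingDist_eq_card_iff {x y : ∀ i, α i} :
    hammingDist x y = Fintype.card ι ↔ ∀ i, x i ≠ y i := by
  simp [hammingDist, Finset.card_eq_iff_eq_univ, Finset.filter_eq_self]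

theorem exists_hammingDist_eq_card [∀ i, Nontrivial (α i)] (x : ∀ i, α i) :
    ∃ y, hammingDist x y = Fintype.card ι := by
  choose y hy using fun i => exists_ne (x i)
  exact ⟨y, hammingDist_eq_card_iff.mpr fun i => (hy i).symm⟩

theorem ne_iff_eq_of_card_eq_two {γ : Type*} (hγ : Nat.card γ = 2) {a b c : γ} (hbc : b ≠ c) :
    a ≠ c ↔ a = b :=
  ⟨fun hac => ((Nat.card_eq_two_iff' c).mp hγ).unique hac hbc, fun hab => hab ▸ hbc⟩

theorem hammingDist_add_hammingDist_of_hammingDist_eq_card (hα : ∀ i, Nat.card (α i) = 2)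
    (x : ∀ i, α i) {y z : ∀ i, α i} (hyz : hammingDist y z = Fintype.card ι) :
    hammingDist x y + hammingDist x z = Fintype.card ι := by
  have differs_from_z_iff (i : ι) : x i ≠ z i ↔ ¬ x i ≠ y i :=
    (ne_iff_eq_of_card_eq_two (hα i) (hammingDist_eq_card_iff.mp hyz i)).trans not_not.symm
  simp only [hammingDist, differs_from_z_iff]
  exact Finset.card_filter_add_card_filter_not _

theorem pnIsometry_preserves_n_sub_p_general (hα : ∀ i, Nat.card (α i) = 2)
    (hβ : ∀ k, Nat.card (β k) = 2) {p q : ℕ} (hp : p ≤ Fintype.card ι)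
    {φ : (∀ i, α i) → ∀ k, β k}
    (hφp : ∀ x y, hammingDist x y = p → hammingDist (φ x) (φ y) = q)
    (hφn : ∀ x y, hammingDist x y = Fintype.card ι →
      hammingDist (φ x) (φ y) = Fintype.card κ)
    (x y : ∀ i, α i) (hxy : hammingDist x y = Fintype.card ι - p) :
    hammingDist (φ x) (φ y) = Fintype.card κ - q := by
  have (i : ι) : Nontrivial (α i) :=
    let ⟨a, b, hab, _⟩ := Nat.card_eq_two_iff.mp (hα i)
    ⟨a, b, hab⟩
  obtain ⟨z, hyz⟩ := exists_hammingDist_eq_card y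
  have hxz : hammingDist x z = p := by
    have := hammingDist_add_hammingDist_of_hammingDist_eq_card hα x hyz
    omega
  have hφ := hammingDist_add_hammingDist_of_hammingDist_eq_card hβ (φ x) (hφn y z hyz)
  rw [hφp x z hxz] at hφ
  exact Nat.eq_sub_of_add_eq hφ

end

/-- Every `{p, n}`-isometry of the Boolean cube `C_n` (with `1 ≤ p ≤ n`) is a
`{p, n-p, n}`-isometry: it also preserves the distance `n - p`. -/
theorem pnIsometry_preserves_n_sub_p (n p : ℕ) (hp1 : 1 ≤ p) (hpn : p ≤ n)
    (φ : (Fin n → ZMod 2) → Fin n → ZMod 2) (hbij : Function.Bijective φ)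
    (hp : ∀ x y, hammingDist x y = p → hammingDist (φ x) (φ y) = p)
    (hn : ∀ x y, hammingDist x y = n → hammingDist (φ x) (φ y) = n) :
    ∀ x y, hammingDist x y = n - p → hammingDist (φ x) (φ y) = n - p := by
  have binary (_ : Fin n) : Nat.card (ZMod 2) = 2 := Nat.card_zmod 2
  simpa using pnIsometry_preserves_n_sub_p_general binary binary (by simpa using hpn) hp
    (by simpa using hn)
end

section
/- Let n be odd and let φ be an (n+1)/2-isometry of C_n. Embed C_n into C_{n+1} via c ↦ (0,c), and define ψ : C_{n+1} → C_{n+1} by ψ((0,c)) = (0, φ(c)) and ψ(1̄ + (0,c)) = 1̄ + (0, φ(c)) for all c ∈ C_n, where 1̄ is the all-ones word of C_{n+1}. Then ψ is an {(n+1)/2, n+1}-isometry of C_{n+1}. -/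
/-!
The antipode `x ↦ 1 + x` of `C_{n+1}` turns a distance `d` to a fixed word into `n + 1 - d`, every
word or its antipode starts with `0`, and `ψ` commutes with the antipode. Hence a distance `d`
between words of `C_{n+1}` can be replaced by `d` or `n + 1 - d` between two words starting with
`0`, where `ψ` acts as `φ`. So a set of distances preserved by `φ` is preserved by `ψ` as soon as
it is closed under `d ↦ n + 1 - d`. For `n` odd, `{(n + 1) / 2}` is closed; the distances `0` and
`n + 1` can always be added, since `n + 1` does not occur in `C_n`.
-/

/-- A `P`-isometry of the cube of words over `α` indexed by `ι`: a bijection preserving every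
Hamming distance that lies in `P`. -/
structure IsPIsometry {ι α : Type*} [Fintype ι] [DecidableEq α] (P : Set ℕ)
    (f : (ι → α) → ι → α) : Prop where
  bijective : Function.Bijective f
  hammingDist_map : ∀ x y, hammingDist x y ∈ P → hammingDist (f x) (f y) = hammingDist x y

namespace IsPIsometry

variable {ι α : Type*} [Fintype ι] [DecidableEq α] {P Q : Set ℕ} {f : (ι → α) → ι → α}

theorem mono (hf : IsPIsometry Q f) (h : P ⊆ Q) : IsPIsometry P f where
  bijective := hf.bijective
  hammingDist_map x y hxy := hf.hammingDist_map x y (h hxy)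

theorem insert_zero (hf : IsPIsometry P f) : IsPIsometry (insert 0 P) f where
  bijective := hf.bijective
  hammingDist_map x y hxy := by
    rcases hxy with h | h
    · rw [hammingDist_eq_zero.mp h, hammingDist_self, hammingDist_self]
    · exact hf.hammingDist_map x y h

theorem insert_of_card_lt (hf : IsPIsometry P f) {d : ℕ} (hd : Fintype.card ι < d) :
    IsPIsometry (insert d P) f where
  bijective := hf.bijective
  hammingDist_map x y hxy := by
    have hne : hammingDist x y ≠ d := (hammingDist_le_card_fintype.trans_lt hd).ne
    exact hf.hammingDist_map x y (hxy.resolve_left hne)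

end IsPIsometry

theorem hammingDist_cons_same {n : ℕ} {α : Fin (n + 1) → Type*} [∀ i, DecidableEq (α i)]
    (a : α 0) (x y : ∀ i : Fin n, α i.succ) :
    hammingDist (Fin.cons a x : ∀ i, α i) (Fin.cons a y) = hammingDist x y := by
  simp [hammingDist, Fin.card_filter_univ_succ]

theorem hammingDist_one_add_left_add {ι : Type*} [Fintype ι] (x y : ι → ZMod 2) :
    hammingDist (1 + x) y + hammingDist x y = Fintype.card ι := by
  have differ_iff : ∀ a b : ZMod 2, 1 + a ≠ b ↔ ¬ a ≠ b := by decide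
  simp only [hammingDist, Pi.add_apply, Pi.one_apply, differ_iff]
  rw [add_comm, Finset.card_filter_add_card_filter_not, Finset.card_univ]

theorem hammingDist_one_add_right_add {ι : Type*} [Fintype ι] (x y : ι → ZMod 2) :
    hammingDist x (1 + y) + hammingDist x y = Fintype.card ι := by
  rw [hammingDist_comm x, hammingDist_comm x, hammingDist_one_add_left_add]

theorem one_add_one_add_self {ι R : Type*} [Semiring R] [CharP R 2] (x : ι → R) :
    1 + (1 + x) = x :=
  funext fun i => CharTwo.add_cancel_left 1 (x i)

theorem cons_zero_antipode_induction {n : ℕ} {motive : (Fin (n + 1) → ZMod 2) → Prop}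
    (cons_zero : ∀ c : Fin n → ZMod 2, motive (Fin.cons 0 c))
    (antipode : ∀ x, motive x → motive (1 + x)) (x : Fin (n + 1) → ZMod 2) : motive x := by
  have of_head_eq_zero (y : Fin (n + 1) → ZMod 2) (hy : y 0 = 0) : motive y := by
    rw [← Fin.cons_self_tail y, hy]
    exact cons_zero _
  have eq_zero_or_one_add_eq_zero : ∀ a : ZMod 2, a = 0 ∨ 1 + a = 0 := by decide
  rcases eq_zero_or_one_add_eq_zero (x 0) with h | h
  · exact of_head_eq_zero x h
  · rw [← one_add_one_add_self x]
    exact antipode _ (of_head_eq_zero (1 + x) h)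

section Extension

variable {n : ℕ} {φ : (Fin n → ZMod 2) → Fin n → ZMod 2}
  {ψ : (Fin (n + 1) → ZMod 2) → Fin (n + 1) → ZMod 2}

theorem map_one_add_of_map_one_add_cons_zero
    (hψ0 : ∀ c : Fin n → ZMod 2, ψ (Fin.cons 0 c) = Fin.cons 0 (φ c))
    (hψ1 : ∀ c : Fin n → ZMod 2, ψ (1 + Fin.cons 0 c) = 1 + Fin.cons 0 (φ c))
    (x : Fin (n + 1) → ZMod 2) : ψ (1 + x) = 1 + ψ x := by
  induction x using cons_zero_antipode_induction with
  | cons_zero c => rw [hψ1, hψ0]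
  | antipode x ih => rw [ih, one_add_one_add_self, one_add_one_add_self]

theorem surjective_of_map_cons_zero (hφ : Function.Surjective φ)
    (hψ0 : ∀ c : Fin n → ZMod 2, ψ (Fin.cons 0 c) = Fin.cons 0 (φ c))
    (hψ : ∀ x, ψ (1 + x) = 1 + ψ x) : Function.Surjective ψ := by
  intro y
  induction y using cons_zero_antipode_induction with
  | cons_zero c =>
    obtain ⟨b, rfl⟩ := hφ c
    exact ⟨Fin.cons 0 b, hψ0 b⟩
  | antipode y ih =>
    obtain ⟨x, rfl⟩ := ih
    exact ⟨1 + x, hψ x⟩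

theorem hammingDist_map_of_map_cons_zero {P : Set ℕ}
    (hP : ∀ ⦃d e⦄, d + e = n + 1 → d ∈ P → e ∈ P)
    (hφ : ∀ a b, hammingDist a b ∈ P → hammingDist (φ a) (φ b) = hammingDist a b)
    (hψ0 : ∀ c : Fin n → ZMod 2, ψ (Fin.cons 0 c) = Fin.cons 0 (φ c))
    (hψ : ∀ x, ψ (1 + x) = 1 + ψ x) (x y : Fin (n + 1) → ZMod 2)
    (hxy : hammingDist x y ∈ P) : hammingDist (ψ x) (ψ y) = hammingDist x y := by
  induction x using cons_zero_antipode_induction generalizing y with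
  | cons_zero a =>
    induction y using cons_zero_antipode_induction with
    | cons_zero b =>
      rw [hammingDist_cons_same] at hxy
      rw [hψ0, hψ0, hammingDist_cons_same, hammingDist_cons_same, hφ a b hxy]
    | antipode y ih =>
      have hsum := hammingDist_one_add_right_add (Fin.cons 0 a) y
      have hsum_map := hammingDist_one_add_right_add (ψ (Fin.cons 0 a)) (ψ y)
      rw [Fintype.card_fin] at hsum hsum_map
      rw [hψ]
      have hdist := ih (hP hsum hxy)
      omega
  | antipode x ih =>
    have hsum := hammingDist_one_add_left_add x y
    have hsum_map := hammingDist_one_add_left_add (ψ x) (ψ y)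
    rw [Fintype.card_fin] at hsum hsum_map
    rw [hψ]
    have hdist := ih y (hP hsum hxy)
    omega

theorem extend_to_cube_succ_general {P : Set ℕ}
    (hP : ∀ ⦃d e⦄, d + e = n + 1 → d ∈ P → e ∈ P) (hφ : IsPIsometry P φ)
    (hψ0 : ∀ c : Fin n → ZMod 2, ψ (Fin.cons 0 c) = Fin.cons 0 (φ c))
    (hψ1 : ∀ c : Fin n → ZMod 2, ψ (1 + Fin.cons 0 c) = 1 + Fin.cons 0 (φ c)) :
    IsPIsometry (insert (n + 1) P) ψ := by
  have hψ := map_one_add_of_map_one_add_cons_zero hψ0 hψ1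
  have hφ' : IsPIsometry (insert 0 (insert (n + 1) P)) φ :=
    (hφ.insert_of_card_lt (by rw [Fintype.card_fin]; exact n.lt_succ_self)).insert_zero
  have hP' : ∀ ⦃d e⦄, d + e = n + 1 → d ∈ insert 0 (insert (n + 1) P) →
      e ∈ insert 0 (insert (n + 1) P) := by
    rintro d e hde (rfl | rfl | hd)
    · exact .inr (.inl (by omega))
    · exact .inl (by omega)
    · exact .inr (.inr (hP hde hd))
  have hψ_surj := surjective_of_map_cons_zero hφ.bijective.surjective hψ0 hψ
  have hψ' : IsPIsometry (insert 0 (insert (n + 1) P)) ψ :=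
    ⟨Finite.surjective_iff_bijective.mp hψ_surj,
      hammingDist_map_of_map_cons_zero hP' hφ'.hammingDist_map hψ0 hψ⟩
  exact hψ'.mono (Set.subset_insert 0 _)

end Extension

theorem eq_half_of_add_eq_of_odd {n d e : ℕ} (hn : Odd n) (hde : d + e = n + 1)
    (hd : d = (n + 1) / 2) : e = (n + 1) / 2 := by
  obtain ⟨k, rfl⟩ := hn
  omega

/-- For `n` odd, an `(n+1)/2`-isometry `φ` of `C_n` extends, via the embedding
`c ↦ (0, c)` of `C_n` into `C_{n+1}` and the rule `ψ(0,c) = (0, φ c)`,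
`ψ(1̄ + (0,c)) = 1̄ + (0, φ c)`, to an `{(n+1)/2, n+1}`-isometry `ψ` of `C_{n+1}`. -/
theorem extend_to_cube_succ (n : ℕ) (hodd : Odd n)
    (φ : (Fin n → ZMod 2) → Fin n → ZMod 2) (hbij : Function.Bijective φ)
    (hφ : ∀ x y, hammingDist x y = (n + 1) / 2 →
      hammingDist (φ x) (φ y) = (n + 1) / 2)
    (ψ : (Fin (n + 1) → ZMod 2) → Fin (n + 1) → ZMod 2)
    (hψ0 : ∀ c : Fin n → ZMod 2,
      ψ (Fin.cons 0 c) = Fin.cons 0 (φ c))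
    (hψ1 : ∀ c : Fin n → ZMod 2,
      ψ (1 + Fin.cons 0 c) = 1 + Fin.cons 0 (φ c)) :
    Function.Bijective ψ ∧
    ∀ x y : Fin (n + 1) → ZMod 2,
      (hammingDist x y = (n + 1) / 2 ∨ hammingDist x y = n + 1) →
      hammingDist (ψ x) (ψ y) = hammingDist x y := by
  have hφ_half : IsPIsometry {(n + 1) / 2} φ := ⟨hbij, fun x y h => (hφ x y h).trans h.symm⟩
  have hψ : IsPIsometry {n + 1, (n + 1) / 2} ψ :=
    extend_to_cube_succ_general (fun _ _ => eq_half_of_add_eq_of_odd hodd) hφ_half hψ0 hψ1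
  exact ⟨hψ.bijective, fun x y h => hψ.hammingDist_map x y h.symm⟩
end

section
/- Let n be odd and let φ be a σ_{i,j}-mapping on C_n. Then φ maps the set E of even-weight words onto E and the set O of odd-weight words onto O, and for every word a one has φ ∘ T_a = T_{φ(a)} ∘ φ. -/
/-- The `σ_{i,j}`-mapping of the Boolean cube `C_n` associated with coordinates `i, j` and
a bijection `σ : {1,…,n} \ {i} → {1,…,n} \ {j}`. -/
def sigmaMap (n : ℕ) (i j : Fin n)
    (σ : {k : Fin n // k ≠ i} ≃ {k : Fin n // k ≠ j}) :
    (Fin n → ZMod 2) → Fin n → ZMod 2 :=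
  fun c k => if h : k = j then c i else c (σ.symm ⟨k, h⟩).1 + c i

/-!
Over `ZMod 2` the parity of the weight of a word is the sum of its coordinates. A `σ_{i,j}`-mapping
permutes the coordinates and adds `c i` to all of them but one; this changes the coordinate sum by
`(n - 1) c i`, which vanishes for `n` odd. The mapping is surjective because the
`σ⁻¹_{j,i}`-mapping inverts it.
-/

theorem image_setOf_eq_of_surjective {α β : Type*} {f : α → β} (hf : Function.Surjective f)
    {p : α → Prop} {q : β → Prop} (hpq : ∀ a, q (f a) ↔ p a) : f '' {a | p a} = {b | q b} := by
  have preimage_eq : f ⁻¹' {b | q b} = {a | p a} := Set.ext hpq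
  rw [← preimage_eq, Set.image_preimage_eq _ hf]

theorem natCast_hammingNorm_eq_sum {ι : Type*} [Fintype ι] (c : ι → ZMod 2) :
    (hammingNorm c : ZMod 2) = ∑ k, c k := by
  have indicator_eq : ∀ x : ZMod 2, (if x ≠ 0 then 1 else 0) = x := by decide
  simp only [hammingNorm, Finset.natCast_card_filter, indicator_eq]

theorem even_hammingNorm_iff_sum_eq_zero {ι : Type*} [Fintype ι] (c : ι → ZMod 2) :
    Even (hammingNorm c) ↔ ∑ k, c k = 0 := by
  rw [← ZMod.natCast_eq_zero_iff_even, natCast_hammingNorm_eq_sum]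

section SigmaMap

variable {n : ℕ} {i j : Fin n} (σ : {k : Fin n // k ≠ i} ≃ {k : Fin n // k ≠ j})

theorem sigmaMap_apply_self (c : Fin n → ZMod 2) : sigmaMap n i j σ c j = c i :=
  dif_pos rfl

theorem sigmaMap_apply_coe (c : Fin n → ZMod 2) (k : {k : Fin n // k ≠ j}) :
    sigmaMap n i j σ c k = c (σ.symm k) + c i :=
  dif_neg k.2

theorem sigmaMap_add (c d : Fin n → ZMod 2) :
    sigmaMap n i j σ (c + d) = sigmaMap n i j σ c + sigmaMap n i j σ d := by
  funext k
  obtain rfl | hk := eq_or_ne k j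
  · simp only [Pi.add_apply, sigmaMap_apply_self]
  · lift k to {k : Fin n // k ≠ j} using hk
    simp only [Pi.add_apply, sigmaMap_apply_coe]
    exact add_add_add_comm _ _ _ _

theorem sigmaMap_sigmaMap_symm (c : Fin n → ZMod 2) :
    sigmaMap n i j σ (sigmaMap n j i σ.symm c) = c := by
  funext k
  obtain rfl | hk := eq_or_ne k j
  · simp only [sigmaMap_apply_self]
  · lift k to {k : Fin n // k ≠ j} using hk
    rw [sigmaMap_apply_coe, sigmaMap_apply_coe, sigmaMap_apply_self, Equiv.symm_symm,
      Equiv.apply_symm_apply, add_assoc, CharTwo.add_self_eq_zero, add_zero]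

theorem sigmaMap_surjective : Function.Surjective (sigmaMap n i j σ) :=
  Function.RightInverse.surjective (sigmaMap_sigmaMap_symm σ)

theorem sum_sigmaMap (c : Fin n → ZMod 2) :
    ∑ k, sigmaMap n i j σ c k = ∑ k, c k + (n - 1) • c i := by
  have card_ne : Fintype.card {k : Fin n // k ≠ j} = n - 1 := by
    rw [Fintype.card_subtype_compl, Fintype.card_fin, Fintype.card_subtype_eq]
  calc ∑ k, sigmaMap n i j σ c k
      = c i + ∑ k : {k : Fin n // k ≠ j}, (c (σ.symm k) + c i) := by
        simp only [Fintype.sum_eq_add_sum_subtype_ne _ j, sigmaMap_apply_self, sigmaMap_apply_coe]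
    _ = c i + (∑ k : {k : Fin n // k ≠ i}, c k + (n - 1) • c i) := by
        rw [Finset.sum_add_distrib, σ.symm.sum_comp (fun k => c k), Finset.sum_const,
          Finset.card_univ, card_ne]
    _ = ∑ k, c k + (n - 1) • c i := by
        rw [← add_assoc, ← Fintype.sum_eq_add_sum_subtype_ne]

theorem sum_sigmaMap_of_odd (hn : Odd n) (c : Fin n → ZMod 2) :
    ∑ k, sigmaMap n i j σ c k = ∑ k, c k := by
  have cast_eq_zero : ((n - 1 : ℕ) : ZMod 2) = 0 :=
    (ZMod.natCast_eq_zero_iff_even).2 (Nat.Odd.sub_odd hn odd_one)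
  rw [sum_sigmaMap, nsmul_eq_mul, cast_eq_zero, zero_mul, add_zero]

theorem even_hammingNorm_sigmaMap_iff (hn : Odd n) (c : Fin n → ZMod 2) :
    Even (hammingNorm (sigmaMap n i j σ c)) ↔ Even (hammingNorm c) := by
  simp only [even_hammingNorm_iff_sum_eq_zero, sum_sigmaMap_of_odd σ hn]

theorem odd_hammingNorm_sigmaMap_iff (hn : Odd n) (c : Fin n → ZMod 2) :
    Odd (hammingNorm (sigmaMap n i j σ c)) ↔ Odd (hammingNorm c) := by
  simp only [← Nat.not_even_iff_odd, even_hammingNorm_sigmaMap_iff σ hn]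

end SigmaMap

/-- For `n` odd, every `σ_{i,j}`-mapping `φ` maps the even-weight words onto the
even-weight words and the odd-weight words onto the odd-weight words, and satisfies
`φ ∘ T_a = T_{φ a} ∘ φ` for every word `a`. -/
theorem sigmaMap_properties (n : ℕ) (hodd : Odd n) (i j : Fin n)
    (σ : {k : Fin n // k ≠ i} ≃ {k : Fin n // k ≠ j}) :
    sigmaMap n i j σ '' {c | Even (hammingNorm c)} = {c | Even (hammingNorm c)} ∧
    sigmaMap n i j σ '' {c | Odd (hammingNorm c)} = {c | Odd (hammingNorm c)} ∧
    ∀ (a c : Fin n → ZMod 2),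
      sigmaMap n i j σ (c + a) = sigmaMap n i j σ c + sigmaMap n i j σ a := by
  have surj := sigmaMap_surjective σ
  exact ⟨image_setOf_eq_of_surjective surj (even_hammingNorm_sigmaMap_iff σ hodd),
    image_setOf_eq_of_surjective surj (odd_hammingNorm_sigmaMap_iff σ hodd),
    fun a c => sigmaMap_add σ c a⟩
end
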